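/- A strongly connected signed digraph that is cycle balanced is balanced; that is, if every directed cycle of a strongly connected signed digraph (D, σ) is positive, then every circle of its underlying undirected signed graph is positive. -/

import Mathlib

/-!
In a cycle balanced gain graph every closed directed walk has gain `1`, because cutting out a
directed cycle does not change the gain. If moreover the head of every arc `e` can reach its tail,
then any walk back has gain `(σ e)⁻¹`, so it can stand in for `e` traversed backwards. Hence every
circle of the underlying undirected graph has the gain of some closed directed walk, namely `1`.
-/

open Quiver.Path

section CycleBalanced

variable {V : Type*} [Quiver V] {M : Type*} [Monoid M]

/-- A labelling `w` of the arrows of a quiver by elements of a monoid (a gain function; a signature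
if the monoid is `ℤˣ`) is cycle balanced if every directed cycle has product `1`. A directed cycle
is encoded as a closed path whose vertices, with the repeated endpoint counted once, are distinct;
this admits the empty path, whose product is `1` anyway. -/
def IsCycleBalanced (w : ∀ {u v : V}, (u ⟶ v) → M) : Prop :=
  ∀ ⦃v : V⦄ (p : Quiver.Path v v), p.vertices.dropLast.Nodup → weight w p = 1

theorem eq_nil_of_nodup_vertices {v : V} {p : Quiver.Path v v} (hp : p.vertices.Nodup) :
    p = nil := by
  cases p with
  | nil => rfl
  | cons p e =>
    rw [vertices_cons, List.nodup_concat] at hp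
    exact absurd p.start_mem_vertices hp.1

theorem vertices_sublist_vertices_comp {u v v' : V} (p : Quiver.Path u v) (q : Quiver.Path v v') :
    p.vertices.Sublist (p.comp q).vertices := by
  rw [vertices_comp, ← dropLast_append_end_eq p, List.dropLast_concat]
  exact (List.Sublist.refl _).append (List.singleton_sublist.2 q.start_mem_vertices)

theorem IsCycleBalanced.exists_nodup_vertices_weight_eq {w : ∀ {u v : V}, (u ⟶ v) → M}
    (hw : IsCycleBalanced w) {u v : V} (p : Quiver.Path u v) :
    ∃ q : Quiver.Path u v, q.vertices.Nodup ∧ weight w q = weight w p := by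
  induction p with
  | nil => exact ⟨nil, List.nodup_singleton u, rfl⟩
  | @cons b c p e ih =>
    obtain ⟨q, hq, hqp⟩ := ih
    by_cases hc : c ∈ q.vertices
    · obtain ⟨q₁, q₂, rfl⟩ := q.exists_eq_comp_of_mem_vertices hc
      have hcycle : weight w (q₂.cons e) = 1 := hw _ <| by
        rw [vertices_comp] at hq
        simpa using hq.of_append_right
      refine ⟨q₁, List.Nodup.sublist (vertices_sublist_vertices_comp q₁ q₂) hq, ?_⟩
      rw [weight_cons, ← hqp, weight_comp, mul_assoc, ← weight_cons, hcycle, mul_one]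
    · exact ⟨q.cons e, (List.nodup_concat _ _).2 ⟨hc, hq⟩, by rw [weight_cons, weight_cons, hqp]⟩

theorem IsCycleBalanced.weight_eq_one {w : ∀ {u v : V}, (u ⟶ v) → M} (hw : IsCycleBalanced w)
    {v : V} (p : Quiver.Path v v) : weight w p = 1 := by
  obtain ⟨q, hq, hqp⟩ := hw.exists_nodup_vertices_weight_eq p
  rw [← hqp, eq_nil_of_nodup_vertices hq, weight_nil]

theorem IsCycleBalanced.weight_eq_inv {G : Type*} [Group G] {w : ∀ {u v : V}, (u ⟶ v) → G}
    (hw : IsCycleBalanced w) {u v : V} (e : u ⟶ v) (p : Quiver.Path v u) : weight w p = (w e)⁻¹ :=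
  eq_inv_of_mul_eq_one_left (by rw [← weight_cons, hw.weight_eq_one])

end CycleBalanced

section VertexLists

variable {V : Type*} [Quiver V]

theorem zip_dropLast_tail_vertices_cons {u v v' : V} (p : Quiver.Path u v) (e : v ⟶ v') :
    (p.cons e).vertices.dropLast.zip (p.cons e).vertices.tail =
      p.vertices.dropLast.zip p.vertices.tail ++ [(v, v')] := by
  have hlength : p.vertices.dropLast.length = p.vertices.tail.length := by simp
  rw [vertices_cons, List.concat_eq_append, List.dropLast_concat,
    List.tail_append_of_ne_nil p.vertices_ne_nil]
  nth_rw 1 [← dropLast_append_end_eq p]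
  exact List.zip_append hlength

theorem nonempty_hom_of_mem_zip_vertices {u v : V} (p : Quiver.Path u v) :
    ∀ a ∈ p.vertices.dropLast.zip p.vertices.tail, Nonempty (a.1 ⟶ a.2) := by
  induction p with
  | nil => simp
  | cons p e ih =>
    rw [zip_dropLast_tail_vertices_cons, List.forall_mem_append, List.forall_mem_singleton]
    exact ⟨ih, ⟨e⟩⟩

theorem prod_map_zip_vertices {M : Type*} [Monoid M] (σ : V → V → M) {u v : V}
    (p : Quiver.Path u v) :
    ((p.vertices.dropLast.zip p.vertices.tail).map fun a => σ a.1 a.2).prod =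
      weightOfEPs σ p := by
  induction p with
  | nil => simp [weightOfEPs_nil]
  | cons p e ih =>
    rw [zip_dropLast_tail_vertices_cons, List.map_append, List.prod_append, ih, List.map_singleton,
      List.prod_singleton, weightOfEPs_cons]

theorem rotate_one_dropLast_vertices_cons {v v' : V} (p : Quiver.Path v v') (e : v' ⟶ v) :
    (p.cons e).vertices.dropLast.rotate 1 = (p.cons e).vertices.tail := by
  rw [vertices_cons, List.concat_eq_append, List.dropLast_concat,
    List.tail_append_of_ne_nil p.vertices_ne_nil,
    List.rotate_eq_drop_append_take (List.length_pos_iff.2 p.vertices_ne_nil), List.drop_one,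
    List.take_one, p.vertices_head?, Option.toList_some]

theorem isCycleBalanced_of_forall_list {M : Type*} [Monoid M] {σ : V → V → M}
    (hσ : ∀ l : List V, l ≠ [] → l.Nodup →
      (∀ a ∈ l.zip (l.rotate 1), Nonempty (a.1 ⟶ a.2)) →
      ((l.zip (l.rotate 1)).map fun a => σ a.1 a.2).prod = 1) :
    IsCycleBalanced fun {u v : V} (_ : u ⟶ v) => σ u v := by
  intro v p hp
  cases p with
  | nil => exact weight_nil _ v
  | cons p e =>
    have hprod := hσ (p.cons e).vertices.dropLast (by simp [vertices_ne_nil]) hp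
    rw [rotate_one_dropLast_vertices_cons] at hprod
    exact (prod_map_zip_vertices σ (p.cons e)).symm.trans
      (hprod (nonempty_hom_of_mem_zip_vertices (p.cons e)))

theorem exists_path_weight_eq_prod {M : Type*} [Monoid M] {w : ∀ {u v : V}, (u ⟶ v) → M}
    {v : V} (t : List V) (u : V) (s : List M) (hs : s.length = (u :: t).length)
    (h : ∀ q ∈ ((u :: t).zip (t ++ [v])).zip s, ∃ p : Quiver.Path q.1.1 q.1.2, weight w p = q.2) :
    ∃ p : Quiver.Path u v, weight w p = s.prod := by
  induction t generalizing u s with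
  | nil =>
    obtain ⟨g, rfl⟩ := List.length_eq_one_iff.1 hs
    simpa using h
  | cons c t ih =>
    obtain ⟨g, s, rfl⟩ := List.exists_cons_of_length_eq_add_one hs
    simp only [List.cons_append, List.zip_cons_cons, List.forall_mem_cons] at h
    obtain ⟨⟨p, hp⟩, hsteps⟩ := h
    obtain ⟨q, hq⟩ := ih c s (by simpa using hs) hsteps
    exact ⟨p.comp q, by rw [weight_comp, hp, hq, List.prod_cons]⟩

end VertexLists

/-- The quiver with an arrow from `u` to `v` exactly when `D u v`; it makes the paths of
`Quiver.Path` available for a digraph given by its arc relation. -/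
abbrev quiverOfRel {V : Type*} (D : V → V → Prop) : Quiver V := ⟨fun u v => PLift (D u v)⟩

theorem reachable_of_reflTransGen {V : Type*} {D : V → V → Prop} {u v : V}
    (h : Relation.ReflTransGen D u v) : @Quiver.Reachable V (quiverOfRel D) u v := by
  let _ : Quiver V := quiverOfRel D
  induction h with
  | refl => exact .refl u
  | tail _ hD ih => exact ih.trans (Quiver.Hom.reachable ⟨hD⟩)

theorem strongly_connected_cycle_balanced_is_balanced_general {V G : Type*} [Group G]
    (D : V → V → Prop) (σ : V → V → G)
    (hreturn : ∀ u v : V, D u v → Relation.ReflTransGen D v u)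
    (hcycbal : ∀ l : List V, l ≠ [] → l.Nodup →
      (∀ p ∈ l.zip (l.rotate 1), D p.1 p.2) →
      ((l.zip (l.rotate 1)).map fun p => σ p.1 p.2).prod = 1)
    (l : List V) (s : List G) (hs : s.length = l.length)
    (hsteps : ∀ q ∈ (l.zip (l.rotate 1)).zip s,
      (D q.1.1 q.1.2 ∧ q.2 = σ q.1.1 q.1.2) ∨
      (D q.1.2 q.1.1 ∧ q.2 = (σ q.1.2 q.1.1)⁻¹)) :
    s.prod = 1 := by
  let _ : Quiver V := quiverOfRel D
  have hσ : IsCycleBalanced fun {u v : V} (_ : u ⟶ v) => σ u v :=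
    isCycleBalanced_of_forall_list fun l hne hnodup harcs =>
      hcycbal l hne hnodup fun a ha => (harcs a ha).some.down
  have hwalk : ∀ q ∈ (l.zip (l.rotate 1)).zip s,
      ∃ p : Quiver.Path q.1.1 q.1.2, weight (fun {u v : V} (_ : u ⟶ v) => σ u v) p = q.2 := by
    intro q hq
    rcases hsteps q hq with ⟨hD, hgain⟩ | ⟨hD, hgain⟩
    · exact ⟨Quiver.Hom.toPath ⟨hD⟩, by
        rw [Quiver.Hom.toPath, weight_cons, weight_nil, one_mul, hgain]⟩
    · obtain ⟨p⟩ := reachable_of_reflTransGen (hreturn _ _ hD)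
      exact ⟨p, (hσ.weight_eq_inv ⟨hD⟩ p).trans hgain.symm⟩
  cases l with
  | nil => rw [List.length_eq_zero_iff.1 hs, List.prod_nil]
  | cons u t =>
    rw [List.rotate_cons_succ, List.rotate_zero] at hwalk
    obtain ⟨p, hp⟩ := exists_path_weight_eq_prod t u s hs hwalk
    rw [← hp, hσ.weight_eq_one p]

/-- Harary et al.: a strongly connected signed digraph that is cycle balanced (every
directed cycle is positive) is balanced (every circle of the underlying undirected
signed graph is positive).

A digraph on `V` is given by its arc relation `D` with arc signs `σ`.  A directed cycle
is given by a nonempty duplicate-free list of vertices, consecutive ones (cyclically,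
via `l.zip (l.rotate 1)`) joined by arcs of `D`.  The circles of the underlying
undirected signed graph are: loops; digons, consisting of a pair of opposite arcs
between two vertices; and circles of length at least 3, given by a duplicate-free
vertex list where each cyclically consecutive pair is joined by an arc of `D` used in
either direction, the sign of each step being the sign of the arc used. -/
theorem strongly_connected_cycle_balanced_is_balanced {V : Type*}
    (D : V → V → Prop) (σ : V → V → ℤˣ)
    (hstrong : ∀ u v : V, Relation.ReflTransGen D u v)
    (hcycbal : ∀ l : List V, l ≠ [] → l.Nodup →
      (∀ p ∈ l.zip (l.rotate 1), D p.1 p.2) →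
      ((l.zip (l.rotate 1)).map fun p => σ p.1 p.2).prod = 1) :
    (∀ v : V, D v v → σ v v = 1) ∧
    (∀ u v : V, u ≠ v → D u v → D v u → σ u v * σ v u = 1) ∧
    (∀ l : List V, 3 ≤ l.length → l.Nodup → ∀ s : List ℤˣ, s.length = l.length →
      (∀ q ∈ (l.zip (l.rotate 1)).zip s,
        (D q.1.1 q.1.2 ∧ q.2 = σ q.1.1 q.1.2) ∨
        (D q.1.2 q.1.1 ∧ q.2 = σ q.1.2 q.1.1)) →
      s.prod = 1) := by
  have hcircle := strongly_connected_cycle_balanced_is_balanced_general D σ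
    (fun u v _ => hstrong v u) hcycbal
  simp only [Int.units_inv_eq_self] at hcircle
  exact ⟨fun v hv => by simpa [hv] using hcircle [v] [σ v v],
    fun u v _ huv hvu => by simpa [huv, hvu] using hcircle [u, v] [σ u v, σ v u],
    fun l _ _ => hcircle l⟩
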